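/- The function x ↦ Σ_{k=0}^∞ (1/k!) S_k(x), where S_k(x) := Σ_j λ_j(x)^k, is analytic on E; in particular, x ↦ Σ_j exp(λ_j(x)) is analytic. -/

import Mathlib

/-! The power sums `S_k` of the eigenvalues satisfy the linear recurrence whose characteristic
polynomial is `t ↦ p (x - t e)`, normalized to be monic. The companion operator `A` of the
recurrence shifts solutions, so `A ^ k (S_0, …, S_{n-1}) = (S_k, …, S_{k+n-1})`, and
`∑ k, S_k / k!` is the first coordinate of `exp A (S_0, …, S_{n-1})`. Unlike the individual
eigenvalues, both ingredients are analytic in `x`: `A` is affine in the coefficients of the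
polynomial, and the power sums are polynomials in the elementary symmetric functions of its roots,
which are those coefficients up to sign. -/

open Filter Topology Polynomial

section CompanionOperator

theorem tupleSucc_apply_of_isSolution {R : Type*} [CommSemiring R] {L : LinearRecurrence R}
    {u : ℕ → R} (hu : L.IsSolution u) (m : ℕ) :
    L.tupleSucc (fun i : Fin L.order => u (m + i)) = fun i : Fin L.order => u (m + 1 + i) := by
  ext i
  simp only [LinearRecurrence.tupleSucc, LinearMap.coe_mk, AddHom.coe_mk]
  split_ifs with hi
  · rw [add_right_comm, add_assoc]
  · have hlast : m + 1 + (i : ℕ) = m + L.order := by omega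
    rw [hlast, hu m]

theorem tupleSucc_pow_apply_of_isSolution {R : Type*} [CommSemiring R] {L : LinearRecurrence R}
    {u : ℕ → R} (hu : L.IsSolution u) (k : ℕ) :
    (L.tupleSucc ^ k) (fun i : Fin L.order => u i) = fun i : Fin L.order => u (k + i) := by
  induction k with
  | zero => simp only [pow_zero, Module.End.one_apply, zero_add]
  | succ k ih => rw [pow_succ', Module.End.mul_apply, ih, tupleSucc_apply_of_isSolution hu]

theorem hasSum_exp_tupleSucc_apply {𝕜 : Type*} [RCLike 𝕜] {L : LinearRecurrence 𝕜} {u : ℕ → 𝕜}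
    (hu : L.IsSolution u) (i : Fin L.order) :
    HasSum (fun k : ℕ => (k.factorial : 𝕜)⁻¹ * u (k + i))
      (NormedSpace.exp L.tupleSucc.toContinuousLinearMap (fun j : Fin L.order => u j) i) := by
  have hpow (k : ℕ) :
      (L.tupleSucc.toContinuousLinearMap ^ k) (fun j : Fin L.order => u j) =
        fun j : Fin L.order => u (k + j) := by
    rw [← tupleSucc_pow_apply_of_isSolution hu k, ← ContinuousLinearMap.coe_coe,
      ContinuousLinearMap.toLinearMap_pow, LinearMap.coe_toContinuousLinearMap]
  have hseries := (NormedSpace.exp_series_hasSum_exp' (𝕂 := 𝕜)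
    L.tupleSucc.toContinuousLinearMap).mapL (.apply 𝕜 _ fun j : Fin L.order => u j)
  simpa [hpow] using Pi.hasSum.1 hseries i

end CompanionOperator

section AnalyticFamilies

theorem analyticAt_clm_of_forall_apply {𝕜 E V W : Type*} [NontriviallyNormedField 𝕜]
    [CompleteSpace 𝕜] [NormedAddCommGroup E] [NormedSpace 𝕜 E] [NormedAddCommGroup V]
    [NormedSpace 𝕜 V] [FiniteDimensional 𝕜 V] [NormedAddCommGroup W] [NormedSpace 𝕜 W] {z : E}
    {A : E → V →L[𝕜] W} (hA : ∀ v, AnalyticAt 𝕜 (fun x => A x v) z) : AnalyticAt 𝕜 A z := by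
  let coords : V ≃L[𝕜] (Fin (Module.finrank 𝕜 V) → 𝕜) :=
    .ofFinrankEq (Module.finrank_fin_fun 𝕜).symm
  let columns := (coords.arrowCongr (.refl 𝕜 W)).trans (.piRing _)
  have hcolumns : AnalyticAt 𝕜 (fun x => columns (A x)) z := AnalyticAt.pi fun i => hA _
  simpa only [Function.comp_def, columns.symm_apply_apply] using
    (columns.symm.analyticAt _).comp hcolumns

theorem analyticAt_tupleSucc {𝕜 E : Type*} [NontriviallyNormedField 𝕜] [CompleteSpace 𝕜]
    [NormedAddCommGroup E] [NormedSpace 𝕜 E] {z : E} {n : ℕ} {a : E → Fin n → 𝕜}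
    (ha : AnalyticAt 𝕜 a z) :
    AnalyticAt 𝕜 (F := (Fin n → 𝕜) →L[𝕜] Fin n → 𝕜)
      (fun x => (LinearRecurrence.mk n (a x)).tupleSucc.toContinuousLinearMap) z := by
  refine analyticAt_clm_of_forall_apply fun v => AnalyticAt.pi fun i => ?_
  change AnalyticAt 𝕜 (fun x => if h : (i : ℕ) + 1 < n then v ⟨i + 1, h⟩ else ∑ j, a x j * v j) z
  split_ifs
  · exact analyticAt_const
  · exact Finset.univ.analyticAt_fun_sum fun j _ =>
      (analyticAt_pi_iff.1 ha j).fun_mul analyticAt_const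

theorem analyticAt_tsum_div_factorial_of_isSolution {𝕜 E : Type*} [RCLike 𝕜]
    [NormedAddCommGroup E] [NormedSpace 𝕜 E] {z : E} {n : ℕ} {a : E → Fin n → 𝕜} {u : E → ℕ → 𝕜}
    (ha : AnalyticAt 𝕜 a z) (hu : ∀ i < n, AnalyticAt 𝕜 (fun x => u x i) z)
    (hsol : ∀ᶠ x in 𝓝 z, (LinearRecurrence.mk n (a x)).IsSolution (u x)) :
    AnalyticAt 𝕜 (fun x => ∑' k : ℕ, (k.factorial : 𝕜)⁻¹ * u x k) z := by
  obtain rfl | hn := n.eq_zero_or_pos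
  · refine analyticAt_const (v := (0 : 𝕜)) |>.congr ?_
    filter_upwards [hsol] with x hx
    have hzero (k : ℕ) : u x k = 0 := by simpa using hx k
    simp only [hzero, mul_zero, tsum_zero]
  · have hexp := (NormedSpace.exp_analytic (𝕂 := 𝕜) _).comp (analyticAt_tupleSucc ha)
    have hinit : AnalyticAt 𝕜 (fun x (i : Fin n) => u x i) z := AnalyticAt.pi fun i => hu i i.2
    have happly := ((ContinuousLinearMap.id 𝕜 _).analyticAt_bilinear _).comp (hexp.prod hinit)
    refine (analyticAt_pi_iff.1 happly ⟨0, hn⟩).congr ?_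
    filter_upwards [hsol] with x hx
    simpa using (hasSum_exp_tupleSucc_apply hx ⟨0, hn⟩).tsum_eq.symm

end AnalyticFamilies

section PowerSums

theorem exists_fin_map_eq_of_card {α : Type*} {n : ℕ} {s : Multiset α} (hs : s.card = n) :
    ∃ f : Fin n → α, Finset.univ.val.map f = s := by
  obtain ⟨l, rfl⟩ : ∃ l : List α, (l : Multiset α) = s := ⟨s.toList, s.coe_toList⟩
  obtain rfl : l.length = n := by rwa [Multiset.coe_card] at hs
  exact ⟨l.get, by rw [Fin.univ_val_map, List.ofFn_get]⟩

theorem exists_sum_map_pow_eq_aeval_esymm (R : Type*) [CommRing R] (n k : ℕ) :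
    ∃ Q : MvPolynomial (Fin n) R, ∀ s : Multiset R, s.card = n →
      (s.map (· ^ k)).sum = MvPolynomial.aeval (fun i : Fin n => s.esymm (i + 1)) Q := by
  obtain ⟨Q, hQ⟩ := MvPolynomial.esymmAlgHom_surjective R (Fintype.card_fin n).le
    ⟨MvPolynomial.psum (Fin n) R k, MvPolynomial.psum_isSymmetric (Fin n) R k⟩
  refine ⟨Q, fun s hs => ?_⟩
  obtain ⟨f, rfl⟩ := exists_fin_map_eq_of_card hs
  have hpsum : MvPolynomial.aeval (fun i : Fin n => MvPolynomial.esymm (Fin n) R (i + 1)) Q =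
      MvPolynomial.psum (Fin n) R k := by
    rw [← MvPolynomial.esymmAlgHom_apply, hQ]
  calc ((Finset.univ.val.map f).map (· ^ k)).sum
      = MvPolynomial.aeval f (MvPolynomial.psum (Fin n) R k) := by
        simp only [MvPolynomial.psum, map_sum, map_pow, MvPolynomial.aeval_X, Multiset.map_map]
        rfl
    _ = MvPolynomial.aeval (fun i : Fin n => (Finset.univ.val.map f).esymm (i + 1)) Q := by
        simp only [← hpsum, ← MvPolynomial.aeval_esymm_eq_multiset_esymm (Fin n) R]
        rw [← MvPolynomial.comp_aeval_apply]

theorem esymm_roots_of_monic_of_splits {K : Type*} [Field K] {p : K[X]} (hp : p.Monic)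
    (hsplit : p.Splits) {k : ℕ} (hk : k ≤ p.natDegree) :
    p.roots.esymm k = (-1) ^ k * p.coeff (p.natDegree - k) := by
  rw [Polynomial.coeff_eq_esymm_roots_of_splits hsplit (Nat.sub_le _ _), hp.leadingCoeff, one_mul,
    Nat.sub_sub_self hk, ← mul_assoc, ← mul_pow, neg_one_mul, neg_neg, one_pow, one_mul]

theorem charPoly_neg_coeff {R : Type*} [CommRing R] {p : R[X]} (hp : p.Monic) {n : ℕ}
    (hn : p.natDegree = n) :
    (LinearRecurrence.mk n fun i => -p.coeff i).charPoly = p := by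
  subst hn
  rw [LinearRecurrence.charPoly, Fin.sum_univ_eq_sum_range (fun i => monomial i (-p.coeff i))]
  conv_rhs => rw [p.as_sum_range, Finset.sum_range_succ, hp.coeff_natDegree]
  simp only [map_neg, Finset.sum_neg_distrib, sub_neg_eq_add, add_comm]

theorem isSolution_sum_map_pow {R : Type*} [CommRing R] {L : LinearRecurrence R}
    {s : Multiset R} (hs : ∀ r ∈ s, L.charPoly.IsRoot r) :
    L.IsSolution fun k => (s.map (· ^ k)).sum := by
  have hgeom : ∀ u ∈ s.map fun r (k : ℕ) => r ^ k, u ∈ L.solSpace :=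
    Multiset.forall_mem_map_iff.2 fun r hr => (L.geom_sol_iff_root_charPoly r).2 (hs r hr)
  have hsum : (fun k => (s.map (· ^ k)).sum) = (s.map fun r (k : ℕ) => r ^ k).sum := by
    ext k
    simp [Pi.multiset_sum_apply]
  rw [L.is_sol_iff_mem_solSpace, hsum]
  exact multiset_sum_mem _ hgeom

end PowerSums

section Roots

theorem analyticAt_sum_roots_pow {𝕜 E : Type*} [NontriviallyNormedField 𝕜]
    [NormedAddCommGroup E] [NormedSpace 𝕜 E] {z : E} {n : ℕ} {p : E → 𝕜[X]}
    (hcoeff : ∀ i, AnalyticAt 𝕜 (fun x => (p x).coeff i) z)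
    (hmonic : ∀ᶠ x in 𝓝 z, (p x).Monic) (hdeg : ∀ᶠ x in 𝓝 z, (p x).natDegree = n)
    (hsplit : ∀ᶠ x in 𝓝 z, (p x).Splits) (k : ℕ) :
    AnalyticAt 𝕜 (fun x => ((p x).roots.map (· ^ k)).sum) z := by
  obtain ⟨Q, hQ⟩ := exists_sum_map_pow_eq_aeval_esymm 𝕜 n k
  have hvieta (i : Fin n) :
      AnalyticAt 𝕜 (fun x => (-1) ^ (i + 1 : ℕ) * (p x).coeff (n - (i + 1))) z :=
    analyticAt_const.mul (hcoeff _)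
  refine (AnalyticAt.aeval_mvPolynomial hvieta Q).congr ?_
  filter_upwards [hmonic, hdeg, hsplit] with x hx_monic hx_deg hx_split
  rw [hQ _ (hx_split.natDegree_eq_card_roots.symm.trans hx_deg)]
  congr 2 with i
  rw [esymm_roots_of_monic_of_splits hx_monic hx_split (by omega), hx_deg]

variable {𝕜 E : Type*} [RCLike 𝕜] [NormedAddCommGroup E] [NormedSpace 𝕜 E] {z : E} {n : ℕ}

theorem analyticAt_tsum_roots_pow_div_factorial_of_monic {p : E → 𝕜[X]}
    (hcoeff : ∀ i, AnalyticAt 𝕜 (fun x => (p x).coeff i) z)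
    (hmonic : ∀ᶠ x in 𝓝 z, (p x).Monic) (hdeg : ∀ᶠ x in 𝓝 z, (p x).natDegree = n)
    (hsplit : ∀ᶠ x in 𝓝 z, (p x).Splits) :
    AnalyticAt 𝕜
      (fun x => ∑' k : ℕ, (k.factorial : 𝕜)⁻¹ * ((p x).roots.map (· ^ k)).sum) z := by
  refine analyticAt_tsum_div_factorial_of_isSolution (n := n) (a := fun x i => -(p x).coeff i)
    (AnalyticAt.pi fun i => (hcoeff i).neg)
    (fun k _ => analyticAt_sum_roots_pow hcoeff hmonic hdeg hsplit k) ?_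
  filter_upwards [hmonic, hdeg] with x hx_monic hx_deg
  refine isSolution_sum_map_pow fun r hr => ?_
  rw [charPoly_neg_coeff hx_monic hx_deg]
  exact isRoot_of_mem_roots hr

theorem analyticAt_tsum_roots_pow_div_factorial (hn : 0 < n) {q : E → 𝕜[X]}
    (hcoeff : ∀ i, AnalyticAt 𝕜 (fun x => (q x).coeff i) z)
    (hdeg : ∀ᶠ x in 𝓝 z, (q x).natDegree ≤ n)
    (hroots : ∀ᶠ x in 𝓝 z, (q x).roots.card = n) :
    AnalyticAt 𝕜
      (fun x => ∑' k : ℕ, (k.factorial : 𝕜)⁻¹ * ((q x).roots.map (· ^ k)).sum) z := by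
  have hnatDegree : ∀ᶠ x in 𝓝 z, (q x).natDegree = n := by
    filter_upwards [hdeg, hroots] with x hx_deg hx_roots
    exact hx_deg.antisymm (hx_roots ▸ (q x).card_roots')
  have hlead : ∀ᶠ x in 𝓝 z, (q x).coeff n ≠ 0 := by
    filter_upwards [hnatDegree] with x hx
    rw [← hx, coeff_natDegree, Ne, leadingCoeff_eq_zero]
    exact ne_zero_of_natDegree_gt (hx ▸ hn)
  let p (x : E) : 𝕜[X] := C ((q x).coeff n)⁻¹ * q x
  have hp_roots : ∀ᶠ x in 𝓝 z, (p x).roots = (q x).roots :=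
    hlead.mono fun x hx => roots_C_mul _ (inv_ne_zero hx)
  have hp_deg : ∀ᶠ x in 𝓝 z, (p x).natDegree = n := by
    filter_upwards [hnatDegree, hlead] with x hx_deg hx_lead
    rw [natDegree_C_mul (inv_ne_zero hx_lead), hx_deg]
  have hp_monic : ∀ᶠ x in 𝓝 z, (p x).Monic := by
    filter_upwards [hp_deg, hlead] with x hx_deg hx_lead
    rw [Monic, leadingCoeff, hx_deg, coeff_C_mul, inv_mul_cancel₀ hx_lead]
  have hp_split : ∀ᶠ x in 𝓝 z, (p x).Splits := by
    filter_upwards [hp_roots, hp_deg, hroots] with x hx_roots hx_deg hx_card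
    rw [splits_iff_card_roots, hx_roots, hx_card, hx_deg]
  have hp_coeff (i : ℕ) : AnalyticAt 𝕜 (fun x => (p x).coeff i) z := by
    simp only [p, coeff_C_mul]
    exact ((hcoeff n).inv hlead.self_of_nhds).mul (hcoeff i)
  refine (analyticAt_tsum_roots_pow_div_factorial_of_monic hp_coeff hp_monic hp_deg
    hp_split).congr ?_
  filter_upwards [hp_roots] with x hx
  rw [hx]

theorem hasSum_sum_map_pow_div_factorial (s : Multiset 𝕜) :
    HasSum (fun k : ℕ => (k.factorial : 𝕜)⁻¹ * (s.map (· ^ k)).sum)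
      (s.map NormedSpace.exp).sum := by
  induction s using Multiset.induction_on with
  | empty => simp
  | cons r s ih =>
    simpa only [Multiset.map_cons, Multiset.sum_cons, mul_add, smul_eq_mul] using
      (NormedSpace.exp_series_hasSum_exp' (𝕂 := 𝕜) r).add ih

theorem sum_exp_eigenvalues_analytic_general (hn : 0 < n) {U : Set E} (hU : IsOpen U)
    {q : E → 𝕜[X]}
    (hcoeff : ∀ i, AnalyticOnNhd 𝕜 (fun x => (q x).coeff i) U)
    (hdeg : ∀ x ∈ U, (q x).natDegree ≤ n) (hroots : ∀ x ∈ U, (q x).roots.card = n) :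
    AnalyticOnNhd 𝕜
      (fun x => ∑' k : ℕ, (1 / (k.factorial : 𝕜)) * ((q x).roots.map (· ^ k)).sum) U ∧
    AnalyticOnNhd 𝕜 (fun x => ((q x).roots.map NormedSpace.exp).sum) U := by
  have hseries : AnalyticOnNhd 𝕜
      (fun x => ∑' k : ℕ, (k.factorial : 𝕜)⁻¹ * ((q x).roots.map (· ^ k)).sum) U := fun z hz =>
    have hmem : ∀ᶠ x in 𝓝 z, x ∈ U := hU.mem_nhds hz
    analyticAt_tsum_roots_pow_div_factorial hn (hcoeff · z hz) (hmem.mono hdeg) (hmem.mono hroots)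
  refine ⟨by simpa only [one_div] using hseries, ?_⟩
  simpa only [(hasSum_sum_map_pow_div_factorial _).tsum_eq] using hseries

end Roots

section LineRestriction

variable {σ R : Type*} [CommRing R]

/-- The univariate polynomial `t ↦ P (x - t e)`, whose roots are the eigenvalues of `x` with respect
to `P` in the direction `e`. -/
noncomputable def lineRestriction (P : MvPolynomial σ R) (e x : σ → R) : R[X] :=
  MvPolynomial.aeval (fun i => C (x i) - X * C (e i)) P

theorem eval_lineRestriction (P : MvPolynomial σ R) (e x : σ → R) (t : R) :
    (lineRestriction P e x).eval t = MvPolynomial.eval (fun i => x i - t * e i) P := by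
  rw [lineRestriction, ← coe_aeval_eq_eval, MvPolynomial.comp_aeval_apply]
  simp only [coe_aeval_eq_eval, eval_sub, eval_mul, eval_C, eval_X]
  rfl

theorem natDegree_lineRestriction_le (P : MvPolynomial σ R) (e x : σ → R) :
    (lineRestriction P e x).natDegree ≤ P.totalDegree := by
  rw [← mul_one P.totalDegree]
  refine MvPolynomial.aeval_natDegree_le P le_rfl _ fun i => ?_
  compute_degree

theorem analyticAt_coeff_aeval {𝕜 E : Type*} [NontriviallyNormedField 𝕜] [NormedAddCommGroup E]
    [NormedSpace 𝕜 E] {z : E} {g : E → σ → 𝕜[X]}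
    (hg : ∀ i k, AnalyticAt 𝕜 (fun x => (g x i).coeff k) z) (P : MvPolynomial σ 𝕜) (k : ℕ) :
    AnalyticAt 𝕜 (fun x => (MvPolynomial.aeval (g x) P).coeff k) z := by
  induction P using MvPolynomial.induction_on generalizing k with
  | C a => simpa only [MvPolynomial.aeval_C] using analyticAt_const
  | add P Q hP hQ =>
    simp only [map_add, coeff_add]
    exact (hP k).add (hQ k)
  | mul_X P i hP =>
    simp only [map_mul, MvPolynomial.aeval_X, coeff_mul]
    exact Finset.analyticAt_fun_sum _ fun m _ => (hP m.1).mul (hg i m.2)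

theorem analyticAt_coeff_lineRestriction {𝕜 E : Type*} [NontriviallyNormedField 𝕜]
    [NormedAddCommGroup E] [NormedSpace 𝕜 E] {z : E} {f : E → σ → 𝕜}
    (hf : ∀ i, AnalyticAt 𝕜 (fun x => f x i) z) (P : MvPolynomial σ 𝕜) (e : σ → 𝕜) (k : ℕ) :
    AnalyticAt 𝕜 (fun x => (lineRestriction P e (f x)).coeff k) z := by
  refine analyticAt_coeff_aeval (fun i m => ?_) P k
  simp only [coeff_sub, coeff_C]
  refine AnalyticAt.sub ?_ analyticAt_const
  split_ifs
  exacts [hf i, analyticAt_const]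

end LineRestriction

/-- The function `x ↦ Σ_{k=0}^∞ S_k(x)/k!` with `S_k(x) = Σ_j λ_j(x)^k` is analytic
on `E`; in particular `x ↦ Σ_j exp(λ_j(x))` is analytic. -/
theorem sum_exp_eigenvalues_analytic
    {d n : ℕ} (hn : 0 < n)
    (K : Set (EuclideanSpace ℝ (Fin d)))
    (hKclosed : IsClosed K) (hKconv : Convex ℝ K)
    (hKcone : ∀ t : ℝ, 0 < t → ∀ x ∈ K, t • x ∈ K)
    (P : MvPolynomial (Fin d) ℝ) (hP : P.IsHomogeneous n)
    (e : EuclideanSpace ℝ (Fin d)) (he : e ∈ interior K)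
    (hcomp : interior K =
      connectedComponentIn {x | MvPolynomial.eval (fun i => x i) P ≠ 0} e)
    (q : EuclideanSpace ℝ (Fin d) → Polynomial ℝ)
    (hq : ∀ x t, (q x).eval t = MvPolynomial.eval (fun i => x i - t * e i) P)
    (hroots : ∀ x, Multiset.card (q x).roots = n) :
    AnalyticOnNhd ℝ
      (fun x : EuclideanSpace ℝ (Fin d) =>
        ∑' k : ℕ, (1 / (k.factorial : ℝ)) *
          (((q x).roots.map (fun lam => lam ^ k)).sum)) Set.univ ∧
    AnalyticOnNhd ℝ
      (fun x : EuclideanSpace ℝ (Fin d) =>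
        ((q x).roots.map Real.exp).sum) Set.univ := by
  have hline (x) : q x = lineRestriction P e x :=
    Polynomial.funext fun t => by rw [hq, eval_lineRestriction]
  have hcoeff (k : ℕ) : AnalyticOnNhd ℝ (fun x => (q x).coeff k) Set.univ := fun z _ => by
    have hcoord (i) : AnalyticAt ℝ (fun x : EuclideanSpace ℝ (Fin d) => x i) z :=
      (EuclideanSpace.proj (𝕜 := ℝ) i).analyticAt z
    simpa only [hline] using analyticAt_coeff_lineRestriction hcoord P e k
  have hdeg (x) : (q x).natDegree ≤ n :=
    hline x ▸ (natDegree_lineRestriction_le P e x).trans hP.totalDegree_le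
  simpa only [Real.exp_eq_exp_ℝ] using sum_exp_eigenvalues_analytic_general hn isOpen_univ hcoeff
    (fun x _ => hdeg x) (fun x _ => hroots x)
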